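/- The real Gamma function satisfies Γ(5/24) = (√π · √(√2 − 1) · √(√3 − 1) / (2^(1/6) · √3)) · Γ(1/3)⁻¹ · Γ(1/24). -/

import Mathlib

open Real

lemma aux_convex (a : ℝ) (ha : 0 ≤ a) :
    ConvexOn ℝ (Set.Ioi (0:ℝ)) (fun s => log (Real.Gamma (s / 3 + a))) := by
  refine ⟨convex_Ioi 0, ?_⟩
  intro x hx y hy p q hp hq hpq
  have hx' : (0:ℝ) < x := hx
  have hy' : (0:ℝ) < y := hy
  have h := convexOn_log_Gamma.2 (x := x / 3 + a) (y := y / 3 + a)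
    (show (0:ℝ) < x / 3 + a by positivity) (show (0:ℝ) < y / 3 + a by positivity) hp hq hpq
  have e : (p • x + q • y) / 3 + a = p • (x / 3 + a) + q • (y / 3 + a) := by
    simp only [smul_eq_mul]
    linear_combination (- a) * hpq
  simp only [Function.comp] at h
  simp only [e]
  exact h

noncomputable def tripG (s : ℝ) : ℝ :=
  Real.Gamma (s / 3 + 0) * Real.Gamma (s / 3 + 1 / 3) * Real.Gamma (s / 3 + 2 / 3) * 3 ^ s /
    (3 * Real.Gamma (1 / 3) * Real.Gamma (2 / 3))

lemma aux_trip_eq {s : ℝ} (hs : 0 < s) : tripG s = Real.Gamma s := by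
  have g1 : 0 < Real.Gamma (1/3) := Gamma_pos_of_pos (by norm_num)
  have g2 : 0 < Real.Gamma (2/3) := Gamma_pos_of_pos (by norm_num)
  have hpos : ∀ a : ℝ, 0 ≤ a → ∀ y : ℝ, 0 < y → 0 < Real.Gamma (y / 3 + a) :=
    fun a ha y hy => Gamma_pos_of_pos (by positivity)
  refine eq_Gamma_of_log_convex (f := tripG) ?_ ?_ ?_ ?_ hs
  · have hl : ConvexOn ℝ (Set.Ioi (0:ℝ)) (fun s : ℝ => s * log 3) := by
      simpa only [mul_comm _ (log _)] using!
        (convexOn_id (convex_Ioi (0 : ℝ))).smul (log_pos (by norm_num : (1:ℝ) < 3)).le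
    refine (((((aux_convex 0 le_rfl).add (aux_convex (1/3) (by norm_num))).add
      (aux_convex (2/3) (by norm_num))).add hl).add_const
        (- log (3 * Real.Gamma (1 / 3) * Real.Gamma (2 / 3)))).congr ?_
    intro y hy
    have a0 := (hpos 0 le_rfl y hy).ne'
    have a1 := (hpos (1/3) (by norm_num) y hy).ne'
    have a2 := (hpos (2/3) (by norm_num) y hy).ne'
    have h3 : (3:ℝ) ^ y ≠ 0 := (rpow_pos_of_pos (by norm_num) y).ne'
    simp only [Function.comp, tripG, Pi.add_apply]
    rw [log_div (by positivity) (by positivity), log_mul (by positivity) h3,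
      log_mul (by positivity) a2, log_mul a0 a1, log_rpow (by norm_num)]
    ring
  · intro y hy
    simp only [tripG]
    rw [show (y + 1) / 3 + 0 = y / 3 + 1 / 3 by ring,
      show (y + 1) / 3 + 1 / 3 = y / 3 + 2 / 3 by ring,
      show (y + 1) / 3 + 2 / 3 = (y / 3 + 0) + 1 by ring,
      Gamma_add_one (by positivity), rpow_add (by norm_num), rpow_one]
    ring
  · intro y hy
    have a0 := (hpos 0 le_rfl y hy)
    have a1 := (hpos (1/3) (by norm_num) y hy)
    have a2 := (hpos (2/3) (by norm_num) y hy)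
    unfold tripG
    positivity
  · unfold tripG
    rw [show (1:ℝ) / 3 + 0 = 1 / 3 by norm_num, show (1:ℝ) / 3 + 1 / 3 = 2 / 3 by norm_num,
      show (1:ℝ) / 3 + 2 / 3 = 1 by norm_num, Gamma_one, rpow_one]
    field_simp

theorem gamma_five_twentyfourths :
    Real.Gamma (5/24) =
      (Real.sqrt π * Real.sqrt (Real.sqrt 2 - 1) * Real.sqrt (Real.sqrt 3 - 1) /
          ((2:ℝ) ^ ((1:ℝ)/6) * Real.sqrt 3)) *
        (Real.Gamma (1/3))⁻¹ * Real.Gamma (1/24) := by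
  have t1 := aux_trip_eq (s := 3/24) (by norm_num)
  have t5 := aux_trip_eq (s := 15/24) (by norm_num)
  have d1 := Real.Gamma_mul_Gamma_add_half (1/24)
  have d5 := Real.Gamma_mul_Gamma_add_half (5/24)
  have d2 := Real.Gamma_mul_Gamma_add_half (2/24)
  have d4 := Real.Gamma_mul_Gamma_add_half (4/24)
  have r9 := Real.Gamma_mul_Gamma_one_sub (9/24)
  have r3 := Real.Gamma_mul_Gamma_one_sub (3/24)
  have r10 := Real.Gamma_mul_Gamma_one_sub (10/24)
  have r8 := Real.Gamma_mul_Gamma_one_sub (8/24)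
  unfold tripG at t1 t5
  rw [show (3/24:ℝ)/3 + 0 = 1/24 by norm_num, show (3/24:ℝ)/3 + 1/3 = 9/24 by norm_num,
    show (3/24:ℝ)/3 + 2/3 = 17/24 by norm_num] at t1
  rw [show (15/24:ℝ)/3 + 0 = 5/24 by norm_num, show (15/24:ℝ)/3 + 1/3 = 13/24 by norm_num,
    show (15/24:ℝ)/3 + 2/3 = 21/24 by norm_num] at t5
  rw [show (1/24:ℝ) + 1/2 = 13/24 by norm_num, show 2 * (1/24:ℝ) = 2/24 by norm_num] at d1
  rw [show (5/24:ℝ) + 1/2 = 17/24 by norm_num, show 2 * (5/24:ℝ) = 10/24 by norm_num] at d5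
  rw [show (2/24:ℝ) + 1/2 = 14/24 by norm_num, show 2 * (2/24:ℝ) = 4/24 by norm_num] at d2
  rw [show (4/24:ℝ) + 1/2 = 16/24 by norm_num, show 2 * (4/24:ℝ) = 8/24 by norm_num] at d4
  rw [show 1 - (9/24:ℝ) = 15/24 by norm_num] at r9
  rw [show 1 - (3/24:ℝ) = 21/24 by norm_num] at r3
  rw [show 1 - (10/24:ℝ) = 14/24 by norm_num] at r10
  rw [show 1 - (8/24:ℝ) = 16/24 by norm_num] at r8
  rw [show (1/3:ℝ) = 8/24 by norm_num, show (2/3:ℝ) = 16/24 by norm_num] at t1 t5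
  rw [show (1/3:ℝ) = 8/24 by norm_num]
  -- powers
  obtain ⟨u, hu⟩ : ∃ u : ℝ, u = (2:ℝ) ^ (1/12:ℝ) := ⟨_, rfl⟩
  obtain ⟨v, hv⟩ : ∃ v : ℝ, v = (3:ℝ) ^ (1/8:ℝ) := ⟨_, rfl⟩
  have hu0 : 0 < u := by rw [hu]; positivity
  have hv0 : 0 < v := by rw [hv]; positivity
  have hupow : ∀ (n : ℕ) (x : ℝ), x = n / 12 → (2:ℝ) ^ x = u ^ n := by
    intro n x hx
    rw [hu, ← rpow_natCast, ← rpow_mul (by norm_num), hx]; congr 1; ring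
  have hvpow : ∀ (n : ℕ) (x : ℝ), x = n / 8 → (3:ℝ) ^ x = v ^ n := by
    intro n x hx
    rw [hv, ← rpow_natCast, ← rpow_mul (by norm_num), hx]; congr 1; ring
  have hs2 : √2 = u ^ 6 := by rw [sqrt_eq_rpow]; exact hupow 6 _ (by norm_num)
  have hs3 : √3 = v ^ 4 := by rw [sqrt_eq_rpow]; exact hvpow 4 _ (by norm_num)
  rw [hvpow 1 _ (by norm_num)] at t1
  rw [hvpow 5 _ (by norm_num)] at t5
  rw [hupow 11 _ (by norm_num)] at d1
  rw [hupow 7 _ (by norm_num)] at d5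
  rw [hupow 10 _ (by norm_num)] at d2
  rw [hupow 8 _ (by norm_num)] at d4
  rw [hupow 2 _ (by norm_num)]
  -- trig
  have q2 : √2 ^ 2 = 2 := sq_sqrt (by norm_num)
  have q3 : √3 ^ 2 = 3 := sq_sqrt (by norm_num)
  have qp : √π ^ 2 = π := sq_sqrt pi_pos.le
  have p0 : 0 < √π := sqrt_pos.2 pi_pos
  have l2 : 1 < √2 := by rw [lt_sqrt] <;> norm_num
  have l3 : 1 < √3 := by rw [lt_sqrt] <;> norm_num
  have hs0 : 0 < sin (π * (3/24)) := sin_pos_of_pos_of_lt_pi (by positivity) (by nlinarith [pi_pos])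
  have hsin9 : sin (π * (9/24)) = (1 + √2) * sin (π * (3/24)) := by
    have e1 : sin (π * (9/24)) = cos (π * (3/24)) := by
      rw [← cos_pi_div_two_sub]; congr 1; ring
    have e2 : √2 / 2 = 2 * sin (π * (3/24)) * cos (π * (3/24)) := by
      rw [← sin_two_mul, ← sin_pi_div_four]; congr 1; ring
    have e3 : √2 / 2 = 1 - 2 * sin (π * (3/24)) ^ 2 := by
      have := cos_two_mul (π * (3/24))
      rw [show 2 * (π * (3/24)) = π / 4 by ring, cos_pi_div_four, cos_sq'] at this
      linarith
    rw [e1]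
    have : 2 * sin (π * (3/24)) ≠ 0 := by positivity
    apply mul_left_cancel₀ this
    linear_combination -e2 - (1 + √2) * e3 + q2 / 2
  have hsin10 : sin (π * (10/24)) = √2 * (√3 + 1) / 4 := by
    rw [show π * (10/24) = π / 4 + π / 6 by ring, sin_add, sin_pi_div_four, cos_pi_div_four,
      sin_pi_div_six, cos_pi_div_six]; ring
  have hsin8 : sin (π * (8/24)) = √3 / 2 := by
    rw [← sin_pi_div_three]; congr 1; ring
  rw [hsin9] at r9
  rw [hsin10] at r10
  rw [hsin8] at r8
  have P : ∀ x : ℝ, 0 < x → 0 < Real.Gamma x := fun x => Gamma_pos_of_pos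
  have b1 := P (1/24) (by norm_num)
  have b2 := P (2/24) (by norm_num)
  have b3 := P (3/24) (by norm_num)
  have b4 := P (4/24) (by norm_num)
  have b5 := P (5/24) (by norm_num)
  have b8 := P (8/24) (by norm_num)
  have b9 := P (9/24) (by norm_num)
  have b10 := P (10/24) (by norm_num)
  have b13 := P (13/24) (by norm_num)
  have b14 := P (14/24) (by norm_num)
  have b15 := P (15/24) (by norm_num)
  have b16 := P (16/24) (by norm_num)
  have b17 := P (17/24) (by norm_num)
  have b21 := P (21/24) (by norm_num)
  generalize Real.Gamma (1/24) = g1 at *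
  generalize Real.Gamma (2/24) = g2 at *
  generalize Real.Gamma (3/24) = g3 at *
  generalize Real.Gamma (4/24) = g4 at *
  generalize Real.Gamma (5/24) = g5 at *
  generalize Real.Gamma (8/24) = g8 at *
  generalize Real.Gamma (9/24) = g9 at *
  generalize Real.Gamma (10/24) = g10 at *
  generalize Real.Gamma (13/24) = g13 at *
  generalize Real.Gamma (14/24) = g14 at *
  generalize Real.Gamma (15/24) = g15 at *
  generalize Real.Gamma (16/24) = g16 at *
  generalize Real.Gamma (17/24) = g17 at *
  generalize Real.Gamma (21/24) = g21 at *
  generalize sin (π * (3/24)) = s at *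
  have pp := pi_pos
  have hu12 : u ^ 12 = 2 := by rw [← q2, hs2]; ring
  have hv8 : v ^ 8 = 3 := by rw [← q3, hs3]; ring
  -- step 1
  have A : g1 * g17 = √3 * (1 + √2) * (g5 * g13) := by
    have k1 : g3 = g1 * g9 * g17 * v ^ 1 / (3 * g8 * g16) := t1.symm
    have k5 : g15 = g5 * g13 * g21 * v ^ 5 / (3 * g8 * g16) := t5.symm
    have k : g3 * g21 = (1 + √2) * (g9 * g15) := by
      rw [r3, r9]; field_simp
    rw [k1, k5] at k
    field_simp at k
    rw [hs3]
    linear_combination k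
  have B : g1 ^ 2 * g10 = √3 * (1 + √2) * g5 ^ 2 * g2 * u ^ 4 := by
    have k13 : g13 = g2 * u ^ 11 * √π / g1 := by rw [eq_div_iff b1.ne']; linear_combination d1
    have k17 : g17 = g10 * u ^ 7 * √π / g5 := by rw [eq_div_iff b5.ne']; linear_combination d5
    rw [k13, k17] at A
    field_simp at A
    linear_combination A
  have C : g2 * √π = g10 * g4 * u ^ 10 * (√2 * (√3 + 1) / 4) := by
    have k14 : g14 = π / (√2 * (√3 + 1) / 4) / g10 := by
      rw [eq_div_iff b10.ne']; linear_combination r10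
    rw [← qp] at k14
    rw [k14] at d2
    field_simp at d2
    linear_combination d2 / 4
  have D : g4 * √π * 2 = g8 ^ 2 * u ^ 8 * √3 := by
    have k16 : g16 = π / (√3 / 2) / g8 := by
      rw [eq_div_iff b8.ne']; linear_combination r8
    rw [← qp] at k16
    rw [k16] at d4
    field_simp at d4
    linear_combination d4
  have E : g1 ^ 2 * (8 * √π ^ 2) = 3 * (1 + √2) * (√3 + 1) * √2 * g5 ^ 2 * g8 ^ 2 * u ^ 22 := by
    apply mul_left_cancel₀ b10.ne'
    linear_combination 8 * √π ^ 2 * B + 8 * √π * (√3 * (1 + √2) * g5 ^ 2 * u ^ 4) * C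
      + (√3 * (1 + √2) * g5 ^ 2 * u ^ 4) * (g10 * u ^ 10 * (√2 * (√3 + 1))) * D
      + ((1 + √2) * g5 ^ 2 * u ^ 4) * (g10 * u ^ 10 * (√2 * (√3 + 1))) * (g8 ^ 2 * u ^ 8) * q3
  have F : g1 ^ 2 * (2 * π) = 3 * (1 + √2) * (√3 + 1) * g5 ^ 2 * g8 ^ 2 * u ^ 4 := by
    have h : √2 * u ^ 22 = 4 * u ^ 4 := by
      rw [hs2]; linear_combination (u ^ 16 + 2 * u ^ 4) * hu12
    rw [← qp]
    linear_combination E / 4 + (3 * (1 + √2) * (√3 + 1) * g5 ^ 2 * g8 ^ 2) / 4 * h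
  have sq1 : √(√2 - 1) ^ 2 = √2 - 1 := sq_sqrt (by linarith)
  have sq2 : √(√3 - 1) ^ 2 = √3 - 1 := sq_sqrt (by linarith)
  have n1 := sqrt_nonneg (√2 - 1)
  have n2 := sqrt_nonneg (√3 - 1)
  rw [← pow_left_inj₀ b5.le (by positivity) (two_ne_zero)]
  simp only [mul_pow, div_pow, sq1, sq2, qp, q3, inv_pow]
  field_simp
  linear_combination (-(√2 - 1) * (√3 - 1) / 2) * F
    + (-(3 * g5 ^ 2 * g8 ^ 2 * u ^ 4) * (√3 ^ 2 - 1) / 2) * q2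
    + (-(3 * g5 ^ 2 * g8 ^ 2 * u ^ 4) / 2) * q3
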